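/- For Brauerian split equivalences R : m ⊢ n and P : n ⊢ k, and for u ∈ m, v ∈ k, the pair (u_s, v_t) belongs to P ∗ R if and only if there exists a finite alternating path w_0, w_1, ..., w_{2j+1} of elements of the middle ordinal n (possibly empty, j = -1 meaning directly) connecting u to v, i.e. either (u_s, v_t) arises from {u_s, w_t} ∈ R-classes and {w_s, v_t} ∈ P-classes chained through elements of n. Formally: (u_s, v_t) ∈ P ∗ R iff there exist n_0, ..., n_{2j+1} ∈ n with (u_s, (n_0)_t) ∈ R, ((n_{2i})_s, (n_{2i+1})_t) ∈ P-induced pairing alternately, ..., ((n_{2j+1})_s, v_t) ∈ P, where consecutive connections alternate between R (as caps/transversals on its target side) and P (as cups/transversals on its source side). -/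

import Mathlib

open Sum

/-- Embed the first split relation's carrier into the three-part disjoint union. -/
def embR {α β γ : Type} : α ⊕ β → α ⊕ (β ⊕ γ)
  | inl a => inl a
  | inr b => inr (inl b)

/-- Embed the second split relation's carrier into the three-part disjoint union. -/
def embP {α β γ : Type} : β ⊕ γ → α ⊕ (β ⊕ γ)
  | inl b => inr (inl b)
  | inr c => inr (inr c)

/-- Embed the composite's carrier into the three-part disjoint union. -/
def embO {α β γ : Type} : α ⊕ γ → α ⊕ (β ⊕ γ)
  | inl a => inl a
  | inr c => inr (inr c)

/-- The union R^{-t} ∪ P^{-s} viewed inside the disjoint union of all three parts. -/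
def unionRel {α β γ : Type} (R : α ⊕ β → α ⊕ β → Prop) (P : β ⊕ γ → β ⊕ γ → Prop)
    (x y : α ⊕ (β ⊕ γ)) : Prop :=
  (∃ u v, embR (γ := γ) u = x ∧ embR (γ := γ) v = y ∧ R u v) ∨
  (∃ u v, embP (α := α) u = x ∧ embP (α := α) v = y ∧ P u v)

/-- The composite P ∗ R = Tr(R^{-t} ∪ P^{-s}) ∩ (X^s ∪ Z^t)². -/
def splitComp {α β γ : Type} (R : α ⊕ β → α ⊕ β → Prop) (P : β ⊕ γ → β ⊕ γ → Prop)
    (x y : α ⊕ γ) : Prop :=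
  Relation.TransGen (unionRel R P) (embO (β := β) x) (embO (β := β) y)

/-- A Brauerian split equivalence: an equivalence relation all of whose classes
are two-element sets (every element has a unique partner distinct from itself). -/
def IsBrauerian {σ : Type} (R : σ → σ → Prop) : Prop :=
  Equivalence R ∧ ∀ u, ∃ v, v ≠ u ∧ R u v ∧ ∀ w, R u w → w = u ∨ w = v

/-- The identity Brauerian split equivalence 1ₙ, with classes {kₛ, kₜ} for k < n. -/
def idBr (n : ℕ) (x y : Fin n ⊕ Fin n) : Prop :=
  Sum.elim Fin.val Fin.val x = Sum.elim Fin.val Fin.val y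

/-- A two-element class {u, v} is a transversal: one source, one target element. -/
def IsTransversal {α β : Type} (u v : α ⊕ β) : Prop :=
  ∃ a b, (u = inl a ∧ v = inr b) ∨ (u = inr b ∧ v = inl a)

/-- A two-element class {u, v} is a cup: both elements on the source side. -/
def IsCup {α β : Type} (u v : α ⊕ β) : Prop :=
  ∃ a a', u = inl a ∧ v = inl a'

/-- A two-element class {u, v} is a cap: both elements on the target side. -/
def IsCap {α β : Type} (u v : α ⊕ β) : Prop :=
  ∃ b b', u = inr b ∧ v = inr b'

/-- Middle elements reachable from `u` by an alternating path ending with an `R` step. -/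
inductive ZigReach {α β γ : Type} (R : α ⊕ β → α ⊕ β → Prop) (P : β ⊕ γ → β ⊕ γ → Prop)
    (u : α) : β → Prop
  | base (b : β) : R (inl u) (inr b) → ZigReach R P u b
  | step (b b' b'' : β) : ZigReach R P u b → P (inl b) (inl b') → R (inr b') (inr b'') →
      ZigReach R P u b''

theorem ZigReach.path {α β γ : Type} {R : α ⊕ β → α ⊕ β → Prop} {P : β ⊕ γ → β ⊕ γ → Prop}
    {u : α} {b : β} (h : ZigReach R P u b) :
    ∃ (j : ℕ) (w : ℕ → β), R (inl u) (inr (w 0)) ∧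
      (∀ i < j, P (inl (w (2 * i))) (inl (w (2 * i + 1)))) ∧
      (∀ i < j, R (inr (w (2 * i + 1))) (inr (w (2 * i + 2)))) ∧ w (2 * j) = b := by
  induction h with
  | base b hb => exact ⟨0, fun _ => b, hb, by simp, by simp, rfl⟩
  | step b b' b'' _ hP hR ih =>
    obtain ⟨j, w, h0, h1, h2, h3⟩ := ih
    refine ⟨j + 1, fun t => if t ≤ 2 * j then w t else if t = 2 * j + 1 then b' else b'',
      by simpa using h0, ?_, ?_, ?_⟩
    · intro i hi
      rcases Nat.lt_succ_iff_lt_or_eq.1 hi with h | rfl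
      · have e1 : 2 * i ≤ 2 * j := by omega
        have e2 : 2 * i + 1 ≤ 2 * j := by omega
        simpa only [if_pos e1, if_pos e2] using h1 i h
      · simpa [h3] using hP
    · intro i hi
      rcases Nat.lt_succ_iff_lt_or_eq.1 hi with h | rfl
      · have e1 : 2 * i + 2 ≤ 2 * j := by omega
        have e2 : 2 * i + 1 ≤ 2 * j := by omega
        simpa only [if_pos e1, if_pos e2] using h2 i h
      · simpa using hR
    · have e1 : ¬ 2 * (j + 1) ≤ 2 * j := by omega
      have e2 : ¬ 2 * (j + 1) = 2 * j + 1 := by omega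
      simp only [if_neg e1, if_neg e2]

/-- The invariant preserved along the transitive closure. -/
def ZigInv {α β γ : Type} (R : α ⊕ β → α ⊕ β → Prop) (P : β ⊕ γ → β ⊕ γ → Prop)
    (u : α) : α ⊕ (β ⊕ γ) → Prop
  | inl a => R (inl u) (inl a) ∨ ∃ b, ZigReach R P u b ∧ R (inr b) (inl a)
  | inr (inl b) => ZigReach R P u b
  | inr (inr c) => ∃ b, ZigReach R P u b ∧ P (inl b) (inr c)

theorem ZigInv.next {α β γ : Type} {R : α ⊕ β → α ⊕ β → Prop} {P : β ⊕ γ → β ⊕ γ → Prop}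
    (hR : Equivalence R) (hP : Equivalence P) {u : α} {x y : α ⊕ (β ⊕ γ)}
    (hx : ZigInv R P u x) (h : unionRel R P x y) : ZigInv R P u y := by
  rcases h with ⟨p, q, rfl, rfl, h⟩ | ⟨p, q, rfl, rfl, h⟩
  · rcases p with a | b <;> rcases q with a' | b' <;> simp only [embR, ZigInv] at hx ⊢
    · rcases hx with hx | ⟨b, hb, hx⟩
      · exact Or.inl (hR.trans hx h)
      · exact Or.inr ⟨b, hb, hR.trans hx h⟩
    · rcases hx with hx | ⟨b, hb, hx⟩
      · exact .base _ (hR.trans hx h)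
      · exact .step b b b' hb (hP.refl _) (hR.trans hx h)
    · exact Or.inr ⟨b, hx, h⟩
    · exact .step b b b' hx (hP.refl _) h
  · rcases p with b | c <;> rcases q with b' | c' <;> simp only [embP, ZigInv] at hx ⊢
    · exact .step b b' b' hx h (hR.refl _)
    · exact ⟨b, hx, h⟩
    · obtain ⟨b, hb, hx⟩ := hx
      exact .step b b' b' hb (hP.trans hx h) (hR.refl _)
    · obtain ⟨b, hb, hx⟩ := hx
      exact ⟨b, hb, hP.trans hx h⟩

/-- (uₛ, vₜ) belongs to the composite P ∗ R iff u and v are joined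
by a finite zigzag path through the middle ordinal n, alternating between a
transversal of R, cups of P and caps of R, and ending with a transversal of P. -/
theorem splitComp_zigzag {m n k : ℕ}
    (R : Fin m ⊕ Fin n → Fin m ⊕ Fin n → Prop)
    (P : Fin n ⊕ Fin k → Fin n ⊕ Fin k → Prop)
    (hR : IsBrauerian R) (hP : IsBrauerian P) (u : Fin m) (v : Fin k) :
    splitComp R P (inl u) (inr v) ↔
      ∃ (j : ℕ) (w : Fin (2 * j + 1) → Fin n),
        R (inl u) (inr (w ⟨0, by omega⟩)) ∧
        (∀ i : Fin j, P (inl (w ⟨2 * i.val, by have := i.isLt; omega⟩))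
                        (inl (w ⟨2 * i.val + 1, by have := i.isLt; omega⟩))) ∧
        (∀ i : Fin j, R (inr (w ⟨2 * i.val + 1, by have := i.isLt; omega⟩))
                        (inr (w ⟨2 * i.val + 2, by have := i.isLt; omega⟩))) ∧
        P (inl (w ⟨2 * j, by omega⟩)) (inr v) := by
  constructor
  · intro h
    have key : ∀ y, Relation.TransGen (unionRel R P) (inl u) y → ZigInv R P u y := by
      intro y hy
      induction hy with
      | single h => exact ZigInv.next (x := inl u) hR.1 hP.1 (Or.inl (hR.1.refl _)) h
      | tail _ h ih => exact ZigInv.next hR.1 hP.1 ih h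
    obtain ⟨b, hb, hv⟩ := key _ h
    obtain ⟨j, w, h0, h1, h2, h3⟩ := hb.path
    subst h3
    exact ⟨j, fun i => w i.val, h0, fun i => h1 i i.isLt, fun i => h2 i i.isLt, hv⟩
  · rintro ⟨j, w, h0, h1, h2, h3⟩
    have key : ∀ i (hi : i ≤ j), Relation.TransGen (unionRel R P) (inl u)
        (inr (inl (w ⟨2 * i, by omega⟩))) := by
      intro i
      induction i with
      | zero => exact fun _ => .single (Or.inl ⟨_, _, rfl, rfl, h0⟩)
      | succ i ih =>
        intro hi
        exact ((ih (by omega)).tail (Or.inr ⟨_, _, rfl, rfl, h1 ⟨i, hi⟩⟩)).tail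
          (Or.inl ⟨_, _, rfl, rfl, h2 ⟨i, hi⟩⟩)
    exact (key j le_rfl).tail (Or.inr ⟨_, _, rfl, rfl, h3⟩)
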